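/- Let α > 0, m = ⌈α⌉, and suppose f : [a,b] → ℝ is such that f^{(m-1)} is absolutely continuous on [a,b], f^{(k)}(b) = 0 for k = 1, ..., m-1, and D_{b-}^α f is essentially bounded on [a,b]. Then |f(b) - (1/(b-a)) ∫_a^b f(u) du| ≤ (‖D_{b-}^α f‖_{L^∞([a,b])} / Γ(α+2)) (b-a)^α. -/

import Mathlib

/-!
Let `I^p` denote the right Riemann–Liouville integral of order `p` based at `b`. Fubini's theorem
and the Beta integral give the semigroup law `I^p I^q = I^(p+q)`. As `f^{(k)}(b) = 0` for
`1 ≤ k < m`, iterating `f^{(k)} = f^{(k)}(b) - I^1 f^{(k+1)}` gives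
`f - f(b) = (-1)^m I^m f^{(m)}`, and splitting `I^m = I^α I^(m-α)` turns this into the fractional
Taylor formula `f - f(b) = I^α (D_{b-}^α f)`. Hence
`|f(x) - f(b)| ≤ ‖D_{b-}^α f‖_∞ (b-x)^α / Γ(α+1)`, and averaging this bound over `[a,b]` gives the
inequality.
-/

open MeasureTheory intervalIntegral

/-- `f ∈ AC^m([a,b])`: `f` is `(m-1)`-times continuously differentiable on `[a,b]` and
`f^{(m-1)}` is absolutely continuous on `[a,b]`, i.e. `f^{(m-1)}` is recovered by
integrating its (a.e.) derivative `f^{(m)}`, which is integrable on `[a,b]`. -/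
def IsACDeriv (m : ℕ) (a b : ℝ) (f : ℝ → ℝ) : Prop :=
  ContDiffOn ℝ (m - 1 : ℕ) f (Set.Icc a b) ∧
  IntervalIntegrable (iteratedDerivWithin m f (Set.Icc a b)) MeasureTheory.volume a b ∧
  ∀ x ∈ Set.Icc a b,
    iteratedDerivWithin (m - 1) f (Set.Icc a b) x
      = iteratedDerivWithin (m - 1) f (Set.Icc a b) a
        + ∫ t in a..x, iteratedDerivWithin m f (Set.Icc a b) t

/-- The right Caputo fractional derivative `D_{b-}^α f` of order `α > 0` of `f` on `[a,b]`:
with `m = ⌈α⌉`, it is `((-1)^m / Γ(m-α)) ∫_x^b (t-x)^{m-α-1} f^{(m)}(t) dt` when `α ∉ ℕ`,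
and `(-1)^m f^{(m)}(x)` when `α = m ∈ ℕ`. -/
noncomputable def rightCaputoDeriv (α a b : ℝ) (f : ℝ → ℝ) (x : ℝ) : ℝ :=
  if α = (⌈α⌉₊ : ℝ) then
    (-1 : ℝ) ^ (⌈α⌉₊ : ℕ) * iteratedDerivWithin ⌈α⌉₊ f (Set.Icc a b) x
  else
    ((-1 : ℝ) ^ (⌈α⌉₊ : ℕ) / Real.Gamma ((⌈α⌉₊ : ℝ) - α)) *
      ∫ t in x..b, (t - x) ^ ((⌈α⌉₊ : ℝ) - α - 1) * iteratedDerivWithin ⌈α⌉₊ f (Set.Icc a b) t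

section Triangle

variable {E : Type*} [NormedAddCommGroup E] {a b : ℝ}

/-- The triangle `a < s < t ≤ b` in the `(s, t)`-plane, the domain of integration of iterated
integrals with a variable endpoint. The diagonal is left out because singular kernels
`(t - s) ^ (q - 1)` are only meaningful off it. -/
def upperTriangle (a b : ℝ) : Set (ℝ × ℝ) := {p | a < p.1 ∧ p.1 < p.2 ∧ p.2 ≤ b}

lemma measurableSet_upperTriangle : MeasurableSet (upperTriangle a b) :=
  (measurableSet_lt measurable_const measurable_fst).inter
    ((measurableSet_lt measurable_fst measurable_snd).inter
      (measurableSet_le measurable_snd measurable_const))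

lemma upperTriangle_subset_univ_prod_Ioc : upperTriangle a b ⊆ Set.univ ×ˢ Set.Ioc a b :=
  fun _ hp => ⟨Set.mem_univ _, hp.1.trans hp.2.1, hp.2.2⟩

lemma indicator_upperTriangle_eq_indicator_fst (f : ℝ × ℝ → E) (s t : ℝ) :
    (upperTriangle a b).indicator f (s, t) =
      (Set.Ioc a b).indicator (fun s => (Set.Ioc s b).indicator (fun t => f (s, t)) t) s := by
  simp only [Set.indicator, upperTriangle, Set.mem_ofPred_eq, Set.mem_Ioc]
  grind

lemma indicator_upperTriangle_eq_indicator_snd (f : ℝ × ℝ → E) (s t : ℝ) :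
    (upperTriangle a b).indicator f (s, t) =
      (Set.Ioc a b).indicator (fun t => (Set.Ioo a t).indicator (fun s => f (s, t)) s) t := by
  simp only [Set.indicator, upperTriangle, Set.mem_ofPred_eq, Set.mem_Ioc, Set.mem_Ioo]
  grind

lemma integrableOn_upperTriangle {f : ℝ × ℝ → E}
    (hf : AEStronglyMeasurable f (volume.restrict (upperTriangle a b)))
    (hslice : ∀ t ∈ Set.Ioc a b, IntegrableOn (fun s => f (s, t)) (Set.Ioo a t))
    (hnorm : IntegrableOn (fun t => ∫ s in Set.Ioo a t, ‖f (s, t)‖) (Set.Ioc a b)) :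
    IntegrableOn f (upperTriangle a b) := by
  rw [← integrable_indicator_iff measurableSet_upperTriangle, Measure.volume_eq_prod,
    integrable_prod_iff' ((aestronglyMeasurable_indicator_iff measurableSet_upperTriangle).2 hf)]
  simp only [norm_indicator_eq_indicator_norm, indicator_upperTriangle_eq_indicator_snd]
  refine ⟨.of_forall fun t => ?_, ?_⟩
  · by_cases ht : t ∈ Set.Ioc a b
    · simpa [ht, integrable_indicator_iff] using hslice t ht
    · simp [ht]
  · refine (hnorm.integrable_indicator measurableSet_Ioc).congr (.of_forall fun t => ?_)
    by_cases ht : t ∈ Set.Ioc a b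
    · simp [ht, MeasureTheory.integral_indicator]
    · simp [ht]

lemma intervalIntegral_swap_of_integrableOn_upperTriangle [NormedSpace ℝ E] (hab : a ≤ b)
    {F : ℝ → ℝ → E} (hF : IntegrableOn F.uncurry (upperTriangle a b)) :
    ∫ s in a..b, ∫ t in s..b, F s t = ∫ t in a..b, ∫ s in a..t, F s t := by
  have swap := integral_integral_swap
    (f := fun s t => (upperTriangle a b).indicator F.uncurry (s, t))
    (hF.integrable_indicator measurableSet_upperTriangle)
  have inner_fst (s : ℝ) : ∫ t, (upperTriangle a b).indicator F.uncurry (s, t) =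
      (Set.Ioc a b).indicator (fun s => ∫ t in s..b, F s t) s := by
    simp only [indicator_upperTriangle_eq_indicator_fst]
    by_cases hs : s ∈ Set.Ioc a b
    · simp [hs, MeasureTheory.integral_indicator, integral_of_le hs.2]
    · simp [hs]
  have inner_snd (t : ℝ) : ∫ s, (upperTriangle a b).indicator F.uncurry (s, t) =
      (Set.Ioc a b).indicator (fun t => ∫ s in a..t, F s t) t := by
    simp only [indicator_upperTriangle_eq_indicator_snd]
    by_cases ht : t ∈ Set.Ioc a b
    · simp [ht, MeasureTheory.integral_indicator, integral_of_le ht.1.le,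
        integral_Ioc_eq_integral_Ioo]
    · simp [ht]
  simpa only [inner_fst, inner_snd, MeasureTheory.integral_indicator measurableSet_Ioc,
    ← integral_of_le hab] using swap

end Triangle

section BetaIntegral

variable {p q a b : ℝ}

lemma integral_sub_rpow_mul_sub_rpow (hp : 0 < p) (hq : 0 < q) (hab : a < b) :
    ∫ x in a..b, (x - a) ^ (p - 1) * (b - x) ^ (q - 1) =
      (b - a) ^ (p + q - 1) * ProbabilityTheory.beta p q := by
  have hc : 0 < b - a := sub_pos.2 hab
  have shift := intervalIntegral.integral_comp_sub_right (a := a) (b := b)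
    (fun x => x ^ (p - 1) * (b - a - x) ^ (q - 1)) a
  simp only [sub_sub_sub_cancel_right, sub_self] at shift
  rw [shift]
  apply Complex.ofReal_injective
  calc ((∫ x in 0..b - a, x ^ (p - 1) * (b - a - x) ^ (q - 1) : ℝ) : ℂ)
      = ∫ x in 0..b - a, (x : ℂ) ^ ((p : ℂ) - 1) * (((b - a : ℝ) : ℂ) - x) ^ ((q : ℂ) - 1) := by
        rw [← intervalIntegral.integral_ofReal]
        refine intervalIntegral.integral_congr fun x hx => ?_
        rw [Set.uIcc_of_le hc.le] at hx
        simp [Complex.ofReal_cpow hx.1, Complex.ofReal_cpow (sub_nonneg.2 hx.2)]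
    _ = ((b - a : ℝ) : ℂ) ^ ((p : ℂ) + q - 1) * Complex.betaIntegral p q :=
        Complex.betaIntegral_scaled p q hc
    _ = (((b - a) ^ (p + q - 1) * ProbabilityTheory.beta p q : ℝ) : ℂ) := by
        rw [Complex.betaIntegral_eq_Gamma_mul_div _ _ (by simpa) (by simpa),
          ProbabilityTheory.beta, Complex.ofReal_mul, Complex.ofReal_cpow hc.le]
        simp [Complex.Gamma_ofReal, ← Complex.ofReal_add]

lemma intervalIntegrable_sub_rpow_mul_sub_rpow (hp : 0 < p) (hq : 0 < q) (hab : a < b) :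
    IntervalIntegrable (fun x => (x - a) ^ (p - 1) * (b - x) ^ (q - 1)) volume a b := by
  -- Its integral is positive, whereas a non-integrable function has Bochner integral `0`.
  apply intervalIntegrable_of_integral_ne_zero
  rw [integral_sub_rpow_mul_sub_rpow hp hq hab]
  exact (mul_pos (Real.rpow_pos_of_pos (sub_pos.2 hab) _)
    (ProbabilityTheory.beta_pos hp hq)).ne'

end BetaIntegral

section RiemannLiouville

variable {E : Type*} [NormedAddCommGroup E] [NormedSpace ℝ E] {p q b x : ℝ} {g h : ℝ → E}

/-- The right Riemann–Liouville fractional integral `I_{b-}^p g` of order `p > 0`. The order `0`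
is not the identity: by the convention `Γ 0 = 0`, it gives the zero function. -/
noncomputable def rightRiemannLiouville (p b : ℝ) (g : ℝ → E) (x : ℝ) : E :=
  (Real.Gamma p)⁻¹ • ∫ t in x..b, (t - x) ^ (p - 1) • g t

lemma rightRiemannLiouville_one (b : ℝ) (g : ℝ → E) (x : ℝ) :
    rightRiemannLiouville 1 b g x = ∫ t in x..b, g t := by
  simp [rightRiemannLiouville]

lemma rightRiemannLiouville_const_smul (p b c : ℝ) (g : ℝ → E) (x : ℝ) :
    rightRiemannLiouville p b (fun t => c • g t) x = c • rightRiemannLiouville p b g x := by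
  simp only [rightRiemannLiouville, smul_comm _ c, intervalIntegral.integral_smul]

lemma rightRiemannLiouville_congr (hx : x ≤ b) (hgh : ∀ t ∈ Set.Icc x b, g t = h t) :
    rightRiemannLiouville p b g x = rightRiemannLiouville p b h x := by
  unfold rightRiemannLiouville
  congr 1
  refine intervalIntegral.integral_congr fun t ht => ?_
  simp only [hgh t (Set.uIcc_of_le hx ▸ ht)]

lemma norm_rightRiemannLiouville_le {C : ℝ} (hp : 0 < p) (hx : x ≤ b)
    (hg : ∀ᵐ t ∂volume.restrict (Set.Ioc x b), ‖g t‖ ≤ C) :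
    ‖rightRiemannLiouville p b g x‖ ≤ C / Real.Gamma (p + 1) * (b - x) ^ p := by
  have hΓ : 0 < Real.Gamma p := Real.Gamma_pos_of_pos hp
  have kernel_integrable : IntervalIntegrable (fun t => (t - x) ^ (p - 1)) volume x b := by
    simpa using (intervalIntegrable_rpow' (a := 0) (b := b - x)
      (by linarith : -1 < p - 1)).comp_sub_right x
  have integral_kernel : ∫ t in x..b, (t - x) ^ (p - 1) = (b - x) ^ p / p := by
    rw [intervalIntegral.integral_comp_sub_right (fun t => t ^ (p - 1)), sub_self,
      integral_rpow (.inl (by linarith)), sub_add_cancel, Real.zero_rpow hp.ne', sub_zero]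
  have norm_integral_le : ‖∫ t in x..b, (t - x) ^ (p - 1) • g t‖ ≤ (b - x) ^ p / p * C := by
    rw [← integral_kernel, ← intervalIntegral.integral_mul_const]
    refine norm_integral_le_of_norm_le hx ?_ (kernel_integrable.mul_const C)
    filter_upwards [(ae_restrict_iff' measurableSet_Ioc).1 hg] with t hgt ht
    have hkernel : 0 ≤ (t - x) ^ (p - 1) := Real.rpow_nonneg (sub_nonneg.2 ht.1.le) _
    rw [norm_smul, Real.norm_of_nonneg hkernel]
    exact mul_le_mul_of_nonneg_left (hgt ht) hkernel
  calc ‖rightRiemannLiouville p b g x‖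
      = (Real.Gamma p)⁻¹ * ‖∫ t in x..b, (t - x) ^ (p - 1) • g t‖ := by
        rw [rightRiemannLiouville, norm_smul, Real.norm_of_nonneg (inv_nonneg.2 hΓ.le)]
    _ ≤ (Real.Gamma p)⁻¹ * ((b - x) ^ p / p * C) := by gcongr
    _ = C / Real.Gamma (p + 1) * (b - x) ^ p := by
        rw [Real.Gamma_add_one hp.ne']
        field_simp

lemma integrableOn_upperTriangle_rpow_mul_rpow_smul {a : ℝ} (hp : 0 < p) (hq : 0 < q)
    (hpq : 1 ≤ p + q) (hg : IntegrableOn g (Set.Ioc a b)) :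
    IntegrableOn (fun z : ℝ × ℝ => ((z.1 - a) ^ (p - 1) * (z.2 - z.1) ^ (q - 1)) • g z.2)
      (upperTriangle a b) := by
  have kernel_integrable {t : ℝ} (ht : a < t) :
      IntegrableOn (fun s => (s - a) ^ (p - 1) * (t - s) ^ (q - 1)) (Set.Ioo a t) :=
    (intervalIntegrable_iff_integrableOn_Ioo_of_le ht.le).1
      (intervalIntegrable_sub_rpow_mul_sub_rpow hp hq ht)
  have integral_norm {t : ℝ} (ht : a < t) :
      ∫ s in Set.Ioo a t, ‖((s - a) ^ (p - 1) * (t - s) ^ (q - 1)) • g t‖ =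
        (t - a) ^ (p + q - 1) * (ProbabilityTheory.beta p q * ‖g t‖) := by
    rw [← mul_assoc, ← integral_sub_rpow_mul_sub_rpow hp hq ht, integral_of_le ht.le,
      integral_Ioc_eq_integral_Ioo, ← MeasureTheory.integral_mul_const]
    refine setIntegral_congr_fun measurableSet_Ioo fun s hs => ?_
    have hsa : 0 ≤ s - a := sub_nonneg.2 hs.1.le
    have hts : 0 ≤ t - s := sub_nonneg.2 hs.2.le
    simp only [norm_smul, Real.norm_of_nonneg (show
      0 ≤ (s - a) ^ (p - 1) * (t - s) ^ (q - 1) by positivity)]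
  refine integrableOn_upperTriangle ?_ (fun t ht => (kernel_integrable ht.1).smul_const (g t)) ?_
  · have hg_snd : AEStronglyMeasurable (fun z : ℝ × ℝ => g z.2)
        (volume.restrict (Set.univ ×ˢ Set.Ioc a b)) := by
      rw [Measure.volume_eq_prod, ← Measure.prod_restrict]
      exact hg.aestronglyMeasurable.comp_snd
    refine AEStronglyMeasurable.smul ?_ (hg_snd.mono_set upperTriangle_subset_univ_prod_Ioc)
    exact Measurable.aestronglyMeasurable (by fun_prop)
  · refine IntegrableOn.congr_fun ?_ (fun t ht => (integral_norm ht.1).symm) measurableSet_Ioc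
    -- The exponent `p + q - 1` is nonnegative, so the weight is bounded up to the endpoint `a`.
    have weight_continuous : Continuous fun t : ℝ => (t - a) ^ (p + q - 1) :=
      (continuous_id.sub continuous_const).rpow_const fun _ => .inr (by linarith)
    rw [← integrableOn_Icc_iff_integrableOn_Ioc] at hg ⊢
    exact IntegrableOn.continuousOn_mul weight_continuous.continuousOn (hg.norm.const_mul _)
      isCompact_Icc

theorem rightRiemannLiouville_rightRiemannLiouville [CompleteSpace E] (hp : 0 < p) (hq : 0 < q)
    (hpq : 1 ≤ p + q) (hx : x ≤ b) (hg : IntervalIntegrable g volume x b) :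
    rightRiemannLiouville p b (rightRiemannLiouville q b g) x =
      rightRiemannLiouville (p + q) b g x := by
  have hΓp : Real.Gamma p ≠ 0 := (Real.Gamma_pos_of_pos hp).ne'
  have hΓq : Real.Gamma q ≠ 0 := (Real.Gamma_pos_of_pos hq).ne'
  have swap := intervalIntegral_swap_of_integrableOn_upperTriangle hx
    (F := fun s t => ((s - x) ^ (p - 1) * (t - s) ^ (q - 1)) • g t)
    (integrableOn_upperTriangle_rpow_mul_rpow_smul hp hq hpq hg.1)
  have inner_integral : ∫ t in x..b, ∫ s in x..t, ((s - x) ^ (p - 1) * (t - s) ^ (q - 1)) • g t =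
      ∫ t in x..b, ProbabilityTheory.beta p q • (t - x) ^ (p + q - 1) • g t := by
    refine intervalIntegral.integral_congr_ae (.of_forall fun t ht => ?_)
    rw [Set.uIoc_of_le hx] at ht
    rw [intervalIntegral.integral_smul_const, integral_sub_rpow_mul_sub_rpow hp hq ht.1,
      mul_comm, mul_smul]
  calc rightRiemannLiouville p b (rightRiemannLiouville q b g) x
      = ((Real.Gamma p)⁻¹ * (Real.Gamma q)⁻¹) •
          ∫ s in x..b, ∫ t in s..b, ((s - x) ^ (p - 1) * (t - s) ^ (q - 1)) • g t := by
        simp only [rightRiemannLiouville, smul_comm _ (Real.Gamma q)⁻¹, mul_smul,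
          intervalIntegral.integral_smul]
    _ = ((Real.Gamma p)⁻¹ * (Real.Gamma q)⁻¹ * ProbabilityTheory.beta p q) •
          ∫ t in x..b, (t - x) ^ (p + q - 1) • g t := by
        rw [swap, inner_integral, intervalIntegral.integral_smul, smul_smul]
    _ = rightRiemannLiouville (p + q) b g x := by
        rw [rightRiemannLiouville, ProbabilityTheory.beta]
        congr 1
        field_simp

end RiemannLiouville

section Taylor

variable {m : ℕ} {α a b : ℝ} {f : ℝ → ℝ}

lemma IsACDeriv.intervalIntegrable_iteratedDerivWithin_succ (hf : IsACDeriv m a b f) (hab : a < b)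
    {k : ℕ} (hk : k < m) :
    IntervalIntegrable (iteratedDerivWithin (k + 1) f (Set.Icc a b)) volume a b := by
  obtain hkm | hkm : k + 1 = m ∨ k + 1 ≤ m - 1 := by lia
  · exact hkm ▸ hf.2.1
  · exact (hf.1.continuousOn_iteratedDerivWithin (mod_cast hkm)
      (uniqueDiffOn_Icc hab)).intervalIntegrable_of_Icc hab.le

lemma IsACDeriv.integral_iteratedDerivWithin_succ (hf : IsACDeriv m a b f) (hab : a < b) {k : ℕ}
    (hk : k < m) {x : ℝ} (hx : x ∈ Set.Icc a b) :
    ∫ t in x..b, iteratedDerivWithin (k + 1) f (Set.Icc a b) t =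
      iteratedDerivWithin k f (Set.Icc a b) b - iteratedDerivWithin k f (Set.Icc a b) x := by
  have integrable := hf.intervalIntegrable_iteratedDerivWithin_succ hab hk
  obtain hkm | hkm : k + 1 = m ∨ k + 1 ≤ m - 1 := by lia
  · have hr := hf.2.2
    simp only [← hkm, Nat.add_sub_cancel] at hr
    rw [hr b (Set.right_mem_Icc.2 hab.le), hr x hx, add_sub_add_left_eq_sub]
    refine (integral_interval_sub_left integrable (integrable.mono_set ?_)).symm
    exact Set.uIcc_subset_uIcc_left (Set.Icc_subset_uIcc hx)
  · have hdiff : DifferentiableOn ℝ (iteratedDerivWithin k f (Set.Icc a b)) (Set.Icc a b) :=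
      hf.1.differentiableOn_iteratedDerivWithin (mod_cast hkm) (uniqueDiffOn_Icc hab)
    refine integral_eq_sub_of_hasDerivAt_of_le hx.2
      (hdiff.continuousOn.mono (Set.Icc_subset_Icc_left hx.1)) (fun t ht => ?_)
      (integrable.mono_set (Set.uIcc_subset_uIcc_right (Set.Icc_subset_uIcc hx)))
    have hnhds : Set.Icc a b ∈ nhds t := Icc_mem_nhds (hx.1.trans_lt ht.1) ht.2
    rw [iteratedDerivWithin_succ]
    exact (hdiff t (mem_of_mem_nhds hnhds)).hasDerivWithinAt.hasDerivAt hnhds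

lemma IsACDeriv.sub_eq_rightRiemannLiouville_iteratedDerivWithin (hf : IsACDeriv m a b f)
    (hab : a < b) (hm : 0 < m)
    (hfb : ∀ k : ℕ, 1 ≤ k → k < m → iteratedDerivWithin k f (Set.Icc a b) b = 0)
    {x : ℝ} (hx : x ∈ Set.Icc a b) :
    f x - f b =
      (-1) ^ m * rightRiemannLiouville m b (iteratedDerivWithin m f (Set.Icc a b)) x := by
  suffices ∀ k : ℕ, 1 ≤ k → k ≤ m → f x - f b =
      (-1) ^ k * rightRiemannLiouville k b (iteratedDerivWithin k f (Set.Icc a b)) x from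
    this m hm le_rfl
  intro k hk
  induction k, hk using Nat.le_induction with
  | base =>
    intro _
    have := hf.integral_iteratedDerivWithin_succ hab hm hx
    rw [zero_add, iteratedDerivWithin_zero] at this
    rw [Nat.cast_one, rightRiemannLiouville_one, this, pow_one]
    ring
  | succ k hk ih =>
    intro hkm
    have integrable : IntervalIntegrable (iteratedDerivWithin (k + 1) f (Set.Icc a b)) volume x b :=
      (hf.intervalIntegrable_iteratedDerivWithin_succ hab hkm).mono_set
        (Set.uIcc_subset_uIcc_right (Set.Icc_subset_uIcc hx))
    have deriv_eq : ∀ t ∈ Set.Icc x b, iteratedDerivWithin k f (Set.Icc a b) t =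
        (-1 : ℝ) • rightRiemannLiouville 1 b (iteratedDerivWithin (k + 1) f (Set.Icc a b)) t := by
      intro t ht
      rw [rightRiemannLiouville_one,
        hf.integral_iteratedDerivWithin_succ hab hkm (Set.Icc_subset_Icc_left hx.1 ht),
        hfb k hk hkm]
      simp
    rw [ih (by lia), rightRiemannLiouville_congr hx.2 deriv_eq, rightRiemannLiouville_const_smul,
      rightRiemannLiouville_rightRiemannLiouville (by positivity) one_pos (by simp) hx.2 integrable]
    push_cast
    rw [smul_eq_mul, ← mul_assoc, pow_succ]

lemma rightCaputoDeriv_of_eq_ceil (hα : α = ⌈α⌉₊) :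
    rightCaputoDeriv α a b f =
      fun x => (-1 : ℝ) ^ ⌈α⌉₊ • iteratedDerivWithin ⌈α⌉₊ f (Set.Icc a b) x := by
  ext x
  simp [rightCaputoDeriv, if_pos hα]

lemma rightCaputoDeriv_of_ne_ceil (hα : α ≠ ⌈α⌉₊) :
    rightCaputoDeriv α a b f = fun x => (-1 : ℝ) ^ ⌈α⌉₊ •
      rightRiemannLiouville (⌈α⌉₊ - α) b (iteratedDerivWithin ⌈α⌉₊ f (Set.Icc a b)) x := by
  ext x
  simp [rightCaputoDeriv, if_neg hα, rightRiemannLiouville, div_eq_mul_inv, mul_assoc]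

lemma rightRiemannLiouville_rightCaputoDeriv (hα : 0 < α) {x : ℝ} (hx : x ≤ b)
    (hf : IntervalIntegrable (iteratedDerivWithin ⌈α⌉₊ f (Set.Icc a b)) volume x b) :
    rightRiemannLiouville α b (rightCaputoDeriv α a b f) x =
      (-1) ^ ⌈α⌉₊ *
        rightRiemannLiouville ⌈α⌉₊ b (iteratedDerivWithin ⌈α⌉₊ f (Set.Icc a b)) x := by
  by_cases hαm : α = ⌈α⌉₊
  · rw [rightCaputoDeriv_of_eq_ceil hαm, rightRiemannLiouville_const_smul, ← hαm, smul_eq_mul]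
  · have hpos : 0 < ⌈α⌉₊ - α := sub_pos.2 ((Nat.le_ceil α).lt_of_ne hαm)
    have hceil : (1 : ℝ) ≤ ⌈α⌉₊ := mod_cast Nat.ceil_pos.2 hα
    rw [rightCaputoDeriv_of_ne_ceil hαm, rightRiemannLiouville_const_smul,
      rightRiemannLiouville_rightRiemannLiouville hα hpos (by simpa using hceil) hx hf,
      add_sub_cancel, smul_eq_mul]

theorem IsACDeriv.sub_eq_rightRiemannLiouville_rightCaputoDeriv (hf : IsACDeriv ⌈α⌉₊ a b f)
    (hα : 0 < α) (hab : a < b)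
    (hfb : ∀ k : ℕ, 1 ≤ k → k < ⌈α⌉₊ → iteratedDerivWithin k f (Set.Icc a b) b = 0)
    {x : ℝ} (hx : x ∈ Set.Icc a b) :
    f x - f b = rightRiemannLiouville α b (rightCaputoDeriv α a b f) x := by
  have integrable := hf.2.1.mono_set (Set.uIcc_subset_uIcc_right (Set.Icc_subset_uIcc hx))
  rw [hf.sub_eq_rightRiemannLiouville_iteratedDerivWithin hab (Nat.ceil_pos.2 hα) hfb hx,
    rightRiemannLiouville_rightCaputoDeriv hα hx.2 integrable]

end Taylor

lemma ae_norm_le_toReal_eLpNormEssSup {X E : Type*} [MeasurableSpace X] [NormedAddCommGroup E]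
    {μ : Measure X} {f : X → E} (hf : eLpNormEssSup f μ < ⊤) :
    ∀ᵐ x ∂μ, ‖f x‖ ≤ (eLpNormEssSup f μ).toReal := by
  filter_upwards [ae_le_eLpNormEssSup (f := f) (μ := μ)] with x hx
  simpa using ENNReal.toReal_mono hf.ne hx

lemma norm_sub_average_le_of_norm_sub_right_le_rpow {E : Type*} [NormedAddCommGroup E]
    [NormedSpace ℝ E] [CompleteSpace E] {f : ℝ → E} {K r a b : ℝ} (hab : a < b) (hr : -1 < r)
    (hf : IntervalIntegrable f volume a b)
    (hK : ∀ x ∈ Set.Icc a b, ‖f x - f b‖ ≤ K * (b - x) ^ r) :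
    ‖f b - (1 / (b - a)) • ∫ x in a..b, f x‖ ≤ K / (r + 1) * (b - a) ^ r := by
  have hlen : 0 < b - a := sub_pos.2 hab
  have hr' : r + 1 ≠ 0 := by linarith
  have sub_average : f b - (1 / (b - a)) • ∫ x in a..b, f x =
      -((b - a)⁻¹ • ∫ x in a..b, (f x - f b)) := by
    rw [intervalIntegral.integral_sub hf intervalIntegrable_const, intervalIntegral.integral_const,
      smul_sub, inv_smul_smul₀ hlen.ne', neg_sub, one_div]
  have bound_integrable : IntervalIntegrable (fun x => K * (b - x) ^ r) volume a b := by
    simpa using ((intervalIntegrable_rpow' (a := b - a) (b := 0) hr).comp_sub_left b).const_mul K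
  have integral_bound : ∫ x in a..b, K * (b - x) ^ r = K * ((b - a) ^ (r + 1) / (r + 1)) := by
    rw [intervalIntegral.integral_const_mul, intervalIntegral.integral_comp_sub_left (· ^ r),
      sub_self, integral_rpow (.inl hr), Real.zero_rpow hr', sub_zero]
  calc ‖f b - (1 / (b - a)) • ∫ x in a..b, f x‖
      = (b - a)⁻¹ * ‖∫ x in a..b, (f x - f b)‖ := by
        rw [sub_average, norm_neg, norm_smul, Real.norm_of_nonneg (inv_nonneg.2 hlen.le)]
    _ ≤ (b - a)⁻¹ * (K * ((b - a) ^ (r + 1) / (r + 1))) := by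
        rw [← integral_bound]
        gcongr
        exact norm_integral_le_of_norm_le hab.le
          (.of_forall fun x hx => hK x (Set.Ioc_subset_Icc_self hx)) bound_integrable
    _ = K / (r + 1) * (b - a) ^ r := by
        rw [Real.rpow_add_one hlen.ne']
        field_simp

/-- **Right Caputo fractional Ostrowski inequality, `L^∞` case.** -/
theorem rightCaputo_ostrowski_Linfty (α : ℝ) (hα : 0 < α) (a b : ℝ) (hab : a < b) (f : ℝ → ℝ)
    (hf : IsACDeriv ⌈α⌉₊ a b f)
    (hfb : ∀ k : ℕ, 1 ≤ k → k < ⌈α⌉₊ → iteratedDerivWithin k f (Set.Icc a b) b = 0)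
    (hD : eLpNormEssSup (rightCaputoDeriv α a b f)
        (MeasureTheory.volume.restrict (Set.Icc a b)) < ⊤) :
    |f b - (1 / (b - a)) * ∫ u in a..b, f u|
      ≤ (eLpNormEssSup (rightCaputoDeriv α a b f)
            (MeasureTheory.volume.restrict (Set.Icc a b))).toReal / Real.Gamma (α + 2)
          * (b - a) ^ α := by
  set M := (eLpNormEssSup (rightCaputoDeriv α a b f) (volume.restrict (Set.Icc a b))).toReal
  have caputo_le : ∀ᵐ t ∂volume.restrict (Set.Icc a b), ‖rightCaputoDeriv α a b f t‖ ≤ M :=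
    ae_norm_le_toReal_eLpNormEssSup hD
  have sub_le : ∀ x ∈ Set.Icc a b, ‖f x - f b‖ ≤ M / Real.Gamma (α + 1) * (b - x) ^ α := by
    intro x hx
    rw [hf.sub_eq_rightRiemannLiouville_rightCaputoDeriv hα hab hfb hx]
    exact norm_rightRiemannLiouville_le hα hx.2 <| ae_restrict_of_ae_restrict_of_subset
      (Set.Ioc_subset_Icc_self.trans (Set.Icc_subset_Icc_left hx.1)) caputo_le
  have Gamma_add_two : Real.Gamma (α + 2) = (α + 1) * Real.Gamma (α + 1) := by
    rw [← Real.Gamma_add_one (by positivity), add_assoc, one_add_one_eq_two]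
  rw [Gamma_add_two, mul_comm (α + 1), ← div_div]
  exact norm_sub_average_le_of_norm_sub_right_le_rpow hab (by linarith)
    (hf.1.continuousOn.intervalIntegrable_of_Icc hab.le) sub_le
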